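/- arXiv:2308.07917 — 2 statements merged into one kernel-verified Lean document; each statement's English description precedes it below -/
import Mathlib

section
/- For every g ∈ H¹(ℝ) one has ∫_ℝ (g′(s))² ds − (q−1) ∫_ℝ u(s)^{q−2} g(s)² ds ≥ −(q²Λ/4) ∫_ℝ g(s)² ds, and equality holds if and only if g is a scalar multiple of u^{q/2}. (Equivalently, the lowest eigenvalue of the Schrödinger operator −∂_s² − (q−1)u^{q−2} in L²(ℝ) is −(q²/4)Λ, it is simple, and its eigenfunction is u^{q/2}.) -/
/-!
The proof completes the square. Put `k = q√Λ/2` and `T s = sinh (α s) / cosh (α s)`. The function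
`φ = u^{q/2}` is positive and satisfies `φ' = -k T φ` (`hasDerivAt_groundState`), while
`u^{q-2} = (qΛ/2)(1 - T²)` (`Ufun_rpow_sub_two`). Since `T' = α (1 - T²)`, `k² = q²Λ/4` and
`k (α + k) = (q-1) qΛ/2`, expanding gives, pointwise,
`(g' + k T g)² = g'² - (q-1) u^{q-2} g² + (q²Λ/4) g² + (k T g²)'`.
The last term is an integrable derivative of an integrable function, so it integrates to zero, and
the deficit of the inequality equals `∫ (g' + k T g)²` (`deficit_eq`). It is nonnegative, and by
continuity it vanishes iff `g' = -k T g` everywhere, i.e. iff `(g / φ)' = 0`.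
-/

noncomputable section

/-- α = ((q-2)/2)√Λ. -/
def alphaV (q Λ : ℝ) : ℝ := (q - 2) / 2 * Real.sqrt Λ

/-- β = (qΛ/2)^{1/(q-2)}. -/
def betaV (q Λ : ℝ) : ℝ := (q * Λ / 2) ^ (1 / (q - 2))

/-- The optimizer u(s) = β cosh(αs)^{-2/(q-2)}. -/
def Ufun (q Λ : ℝ) (s : ℝ) : ℝ := betaV q Λ * Real.cosh (alphaV q Λ * s) ^ (-(2 / (q - 2)))

end

/-- `tanh (α s)`, written as a quotient; `-(q√Λ/2)` times it is the logarithmic derivative of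
`u^{q/2}`. -/
noncomputable def tanhV (q Λ s : ℝ) : ℝ :=
  Real.sinh (alphaV q Λ * s) / Real.cosh (alphaV q Λ * s)

lemma hasDerivAt_tanhV (q Λ s : ℝ) :
    HasDerivAt (tanhV q Λ) (alphaV q Λ * (1 - tanhV q Λ s ^ 2)) s := by
  have hlin : HasDerivAt (fun s => alphaV q Λ * s) (alphaV q Λ) s := by
    simpa using (hasDerivAt_id s).const_mul (alphaV q Λ)
  have hc := Real.cosh_pos (alphaV q Λ * s)
  have h := (hlin.sinh).div (hlin.cosh) hc.ne'
  refine h.congr_deriv ?_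
  unfold tanhV
  field_simp

lemma continuous_tanhV (q Λ : ℝ) : Continuous (tanhV q Λ) :=
  continuous_iff_continuousAt.2 fun s => (hasDerivAt_tanhV q Λ s).continuousAt

lemma one_sub_tanhV_sq (q Λ s : ℝ) :
    1 - tanhV q Λ s ^ 2 = (Real.cosh (alphaV q Λ * s) ^ 2)⁻¹ := by
  have hc := Real.cosh_pos (alphaV q Λ * s)
  have := Real.cosh_sq (alphaV q Λ * s)
  unfold tanhV
  field_simp
  linarith

lemma tanhV_sq_le (q Λ s : ℝ) : tanhV q Λ s ^ 2 ≤ 1 := by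
  have h := one_sub_tanhV_sq q Λ s
  have : 0 ≤ (Real.cosh (alphaV q Λ * s) ^ 2)⁻¹ := by positivity
  linarith

lemma abs_tanhV_le (q Λ s : ℝ) : |tanhV q Λ s| ≤ 1 :=
  (sq_le_one_iff_abs_le_one _).1 (tanhV_sq_le q Λ s)

lemma betaV_pos {q Λ : ℝ} (hq : 2 < q) (hΛ : 0 < Λ) : 0 < betaV q Λ := by
  unfold betaV
  have : 0 < q := by linarith
  positivity

lemma Ufun_pos {q Λ : ℝ} (hq : 2 < q) (hΛ : 0 < Λ) (s : ℝ) : 0 < Ufun q Λ s :=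
  mul_pos (betaV_pos hq hΛ) (Real.rpow_pos_of_pos (Real.cosh_pos _) _)

lemma Ufun_rpow_sub_two {q Λ : ℝ} (hq : 2 < q) (hΛ : 0 < Λ) (s : ℝ) :
    Ufun q Λ s ^ (q - 2) = q * Λ / 2 * (1 - tanhV q Λ s ^ 2) := by
  have hc := Real.cosh_pos (alphaV q Λ * s)
  have hq2 : q - 2 ≠ 0 := by linarith
  have hb : 0 ≤ q * Λ / 2 := by
    have : 0 < q := by linarith
    positivity
  rw [one_sub_tanhV_sq, Ufun, Real.mul_rpow (betaV_pos hq hΛ).le (by positivity), betaV,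
    ← Real.rpow_mul hb, ← Real.rpow_mul hc.le]
  have h1 : 1 / (q - 2) * (q - 2) = 1 := by field_simp
  have h2 : -(2 / (q - 2)) * (q - 2) = -2 := by field_simp
  rw [h1, h2, Real.rpow_one, Real.rpow_neg hc.le, Real.rpow_two]

/-- The first-order equation `φ' = -k T φ` for the ground state `φ = u^{q/2}`. -/
lemma hasDerivAt_groundState {q Λ : ℝ} (hq : 2 < q) (hΛ : 0 < Λ) (s : ℝ) :
    HasDerivAt (fun s => Ufun q Λ s ^ (q / 2))
      (-(q / 2 * √Λ * tanhV q Λ s) * Ufun q Λ s ^ (q / 2)) s := by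
  have hlin : HasDerivAt (fun s => alphaV q Λ * s) (alphaV q Λ) s := by
    simpa using (hasDerivAt_id s).const_mul (alphaV q Λ)
  have hc := Real.cosh_pos (alphaV q Λ * s)
  have hq2 : q - 2 ≠ 0 := by linarith
  have hU : HasDerivAt (Ufun q Λ) (-(√Λ * tanhV q Λ s) * Ufun q Λ s) s := by
    have h := ((hlin.cosh).rpow_const (p := -(2 / (q - 2))) (Or.inl hc.ne')).const_mul (betaV q Λ)
    refine h.congr_deriv ?_
    rw [Real.rpow_sub_one hc.ne']
    unfold Ufun tanhV
    -- the chain-rule factor: `α · (2/(q-2)) = √Λ`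
    have ha : alphaV q Λ * (2 / (q - 2)) = √Λ := by unfold alphaV; field_simp
    rw [← ha]
    ring
  have hp := Ufun_pos hq hΛ s
  have h := hU.rpow_const (p := q / 2) (Or.inl hp.ne')
  refine h.congr_deriv ?_
  rw [Real.rpow_sub_one hp.ne']
  field_simp

/-- `g' + k T g` vanishes identically exactly on multiples of the ground state. -/
lemma eq_smul_groundState_iff {q Λ : ℝ} (hq : 2 < q) (hΛ : 0 < Λ) {g : ℝ → ℝ}
    (hg : Differentiable ℝ g) :
    (∀ s, deriv g s + q / 2 * √Λ * tanhV q Λ s * g s = 0) ↔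
      ∃ c : ℝ, g = fun s => c * Ufun q Λ s ^ (q / 2) := by
  have hφ : ∀ s, 0 < Ufun q Λ s ^ (q / 2) := fun s => Real.rpow_pos_of_pos (Ufun_pos hq hΛ s) _
  constructor
  · intro h
    have hd : ∀ s, HasDerivAt (fun s => g s / Ufun q Λ s ^ (q / 2)) 0 s := by
      intro s
      refine ((hg s).hasDerivAt.div (hasDerivAt_groundState hq hΛ s) (hφ s).ne').congr_deriv ?_
      rw [eq_neg_of_add_eq_zero_left (h s)]
      ring
    refine ⟨g 0 / Ufun q Λ 0 ^ (q / 2), funext fun s => ?_⟩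
    have := is_const_of_deriv_eq_zero (fun s => (hd s).differentiableAt) (fun s => (hd s).deriv) s 0
    rw [← this, div_mul_cancel₀ _ (hφ s).ne']
  · rintro ⟨c, rfl⟩ s
    rw [((hasDerivAt_groundState hq hΛ s).const_mul c).deriv]
    ring

lemma integrable_bdd_mul {f w : ℝ → ℝ} (hf : MeasureTheory.Integrable f) (hw : Continuous w)
    (hb : ∀ s, |w s| ≤ 1) : MeasureTheory.Integrable (fun s => w s * f s) :=
  hf.bdd_mul hw.aestronglyMeasurable (Filter.Eventually.of_forall hb)

/-- The deficit of the inequality is the integral of a square, which is itself integrable. -/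
lemma deficit_eq {q Λ : ℝ} (hq : 2 < q) (hΛ : 0 < Λ) {g : ℝ → ℝ} (hg : ContDiff ℝ 1 g)
    (hg2 : MeasureTheory.Integrable (fun s => g s ^ 2))
    (hg'2 : MeasureTheory.Integrable (fun s => deriv g s ^ 2)) :
    MeasureTheory.Integrable
      (fun s => (deriv g s + q / 2 * √Λ * tanhV q Λ s * g s) ^ 2) ∧
    ∫ s, (deriv g s + q / 2 * √Λ * tanhV q Λ s * g s) ^ 2 =
      (∫ s, deriv g s ^ 2) - (q - 1) * (∫ s, Ufun q Λ s ^ (q - 2) * g s ^ 2) +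
        q ^ 2 * Λ / 4 * ∫ s, g s ^ 2 := by
  have hgc := hg.continuous
  have hg'c : Continuous (deriv g) := hg.continuous_deriv le_rfl
  have hT := continuous_tanhV q Λ
  have hΛs : √Λ ^ 2 = Λ := Real.sq_sqrt hΛ.le
  have hcross : MeasureTheory.Integrable (fun s => g s * deriv g s) := by
    refine (hg2.add hg'2).mono' (hgc.mul hg'c).aestronglyMeasurable
      (Filter.Eventually.of_forall fun s => ?_)
    rw [Real.norm_eq_abs, abs_le, Pi.add_apply]
    constructor <;> nlinarith [sq_nonneg (g s + deriv g s), sq_nonneg (g s - deriv g s)]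
  have hV : MeasureTheory.Integrable (fun s => (1 - tanhV q Λ s ^ 2) * g s ^ 2) :=
    integrable_bdd_mul hg2 (by fun_prop) fun s => by
      rw [abs_le]
      constructor <;> nlinarith [sq_nonneg (tanhV q Λ s), tanhV_sq_le q Λ s]
  have hVU : MeasureTheory.Integrable (fun s => Ufun q Λ s ^ (q - 2) * g s ^ 2) := by
    refine (hV.const_mul (q * Λ / 2)).congr (Filter.Eventually.of_forall fun s => ?_)
    simp only [Ufun_rpow_sub_two hq hΛ]
    ring
  -- the boundary term `k T g²`, its derivative, and the vanishing of its integral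
  have hF : MeasureTheory.Integrable (fun s => q / 2 * √Λ * (tanhV q Λ s * g s ^ 2)) :=
    (integrable_bdd_mul hg2 hT (abs_tanhV_le q Λ)).const_mul _
  have hF' : MeasureTheory.Integrable (fun s => q / 2 * √Λ *
      (alphaV q Λ * ((1 - tanhV q Λ s ^ 2) * g s ^ 2)
        + 2 * (tanhV q Λ s * (g s * deriv g s)))) :=
    ((hV.const_mul _).add
      ((integrable_bdd_mul hcross hT (abs_tanhV_le q Λ)).const_mul 2)).const_mul _
  have hderiv : ∀ s, HasDerivAt (fun s => q / 2 * √Λ * (tanhV q Λ s * g s ^ 2))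
      (q / 2 * √Λ * (alphaV q Λ * ((1 - tanhV q Λ s ^ 2) * g s ^ 2)
        + 2 * (tanhV q Λ s * (g s * deriv g s)))) s := by
    intro s
    have hgd := (hg.differentiable one_ne_zero s).hasDerivAt
    refine (((hasDerivAt_tanhV q Λ s).mul (hgd.pow 2)).const_mul _).congr_deriv ?_
    simp only [Nat.cast_ofNat, Nat.add_one_sub_one, pow_one, Pi.pow_apply]
    ring
  have hzero := MeasureTheory.integral_eq_zero_of_hasDerivAt_of_integrable hderiv hF' hF
  have hpt : ∀ s, (deriv g s + q / 2 * √Λ * tanhV q Λ s * g s) ^ 2 =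
      deriv g s ^ 2 - (q - 1) * (Ufun q Λ s ^ (q - 2) * g s ^ 2) + q ^ 2 * Λ / 4 * g s ^ 2 +
        q / 2 * √Λ * (alphaV q Λ * ((1 - tanhV q Λ s ^ 2) * g s ^ 2)
          + 2 * (tanhV q Λ s * (g s * deriv g s))) := by
    intro s
    rw [Ufun_rpow_sub_two hq hΛ, ← hΛs, alphaV, Real.sqrt_sq (Real.sqrt_nonneg Λ)]
    ring
  have h1 : MeasureTheory.Integrable
      (fun s => deriv g s ^ 2 - (q - 1) * (Ufun q Λ s ^ (q - 2) * g s ^ 2)) :=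
    hg'2.sub (hVU.const_mul (q - 1))
  have h2 : MeasureTheory.Integrable
      (fun s => deriv g s ^ 2 - (q - 1) * (Ufun q Λ s ^ (q - 2) * g s ^ 2)
        + q ^ 2 * Λ / 4 * g s ^ 2) :=
    h1.add (hg2.const_mul (q ^ 2 * Λ / 4))
  simp_rw [hpt]
  refine ⟨h2.add hF', ?_⟩
  rw [MeasureTheory.integral_add h2 hF', hzero, add_zero,
    MeasureTheory.integral_add h1 (hg2.const_mul _),
    MeasureTheory.integral_sub hg'2 (hVU.const_mul _), MeasureTheory.integral_const_mul,
    MeasureTheory.integral_const_mul]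

/-- For every `g ∈ H¹(ℝ)` one has
`∫ g'² - (q-1) ∫ u^{q-2} g² ≥ -(q²Λ/4) ∫ g²`, with equality iff `g` is a scalar multiple of
`u^{q/2}`; i.e. the lowest eigenvalue of `-∂_s² - (q-1)u^{q-2}` is `-(q²/4)Λ`, it is simple,
with eigenfunction `u^{q/2}`. -/
theorem ground_state_inequality (q Λ : ℝ) (hq : 2 < q) (hΛ : 0 < Λ)
    (g : ℝ → ℝ) (hg : ContDiff ℝ 1 g)
    (hg2 : MeasureTheory.Integrable (fun s => g s ^ 2))
    (hg'2 : MeasureTheory.Integrable (fun s => deriv g s ^ 2)) :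
    -(q ^ 2 * Λ / 4) * ∫ s, g s ^ 2 ≤
      (∫ s, deriv g s ^ 2) - (q - 1) * ∫ s, Ufun q Λ s ^ (q - 2) * g s ^ 2 ∧
    ((∫ s, deriv g s ^ 2) - (q - 1) * (∫ s, Ufun q Λ s ^ (q - 2) * g s ^ 2) =
        -(q ^ 2 * Λ / 4) * ∫ s, g s ^ 2 ↔
      ∃ c : ℝ, g = fun s => c * Ufun q Λ s ^ (q / 2)) := by
  obtain ⟨h_sq_int, hdef⟩ := deficit_eq hq hΛ hg hg2 hg'2
  have hnn : 0 ≤ ∫ s, (deriv g s + q / 2 * √Λ * tanhV q Λ s * g s) ^ 2 :=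
    MeasureTheory.integral_nonneg fun s => sq_nonneg _
  refine ⟨by linarith, ?_⟩
  rw [← eq_smul_groundState_iff hq hΛ (hg.differentiable one_ne_zero)]
  have hcont : Continuous fun s => (deriv g s + q / 2 * √Λ * tanhV q Λ s * g s) ^ 2 := by
    have := hg.continuous
    have := hg.continuous_deriv le_rfl
    have := continuous_tanhV q Λ
    fun_prop
  constructor
  · intro h s
    have h0 : ∫ s, (deriv g s + q / 2 * √Λ * tanhV q Λ s * g s) ^ 2 = 0 := by linarith
    rw [MeasureTheory.integral_eq_zero_iff_of_nonneg (fun s => sq_nonneg _) h_sq_int] at h0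
    -- an a.e. vanishing continuous function vanishes everywhere
    have h1 := (hcont.ae_eq_iff_eq MeasureTheory.volume continuous_const).1 h0
    exact pow_eq_zero_iff two_ne_zero |>.1 (congrFun h1 s)
  · intro h
    simp only [h, ne_eq, OfNat.ofNat_ne_zero, not_false_eq_true, zero_pow,
      MeasureTheory.integral_zero] at hdef
    linarith
end

section
/- For every g ∈ H¹(ℝ) with ∫_ℝ g(s) u(s)^{q/2} ds = 0 one has ∫_ℝ (g′(s))² ds − (q−1) ∫_ℝ u(s)^{q−2} g(s)² ds ≥ −Λ ∫_ℝ g(s)² ds, and equality holds if and only if g is a scalar multiple of u′ = ∂_s u. (Equivalently, the second eigenvalue of the Schrödinger operator −∂_s² − (q−1)u^{q−2} in L²(ℝ) is −Λ, it is simple, and its eigenfunction is ∂_s u.) -/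
open MeasureTheory Filter Topology

/-! ### Powers of `cosh` and `tanh` -/

theorem hasDerivAt_tanh_mul (a s : ℝ) :
    HasDerivAt (fun s => Real.tanh (a * s)) (a * (1 - Real.tanh (a * s) ^ 2)) s := by
  have h1 : HasDerivAt (fun s => a * s) a s := by simpa using (hasDerivAt_id s).const_mul a
  have hc := (Real.cosh_pos (a * s)).ne'
  have h2 := h1.sinh.fun_div h1.cosh hc
  simp only [Real.tanh_eq_sinh_div_cosh]
  refine h2.congr_deriv ?_
  field_simp

theorem hasDerivAt_cosh_rpow (a p s : ℝ) :
    HasDerivAt (fun s => Real.cosh (a * s) ^ (-p))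
      (-p * a * Real.tanh (a * s) * Real.cosh (a * s) ^ (-p)) s := by
  have h1 : HasDerivAt (fun s => a * s) a s := by simpa using (hasDerivAt_id s).const_mul a
  have hc := Real.cosh_pos (a * s)
  have h2 := h1.cosh.rpow_const (p := -p) (Or.inl hc.ne')
  refine h2.congr_deriv ?_
  rw [Real.rpow_sub_one hc.ne', Real.tanh_eq_sinh_div_cosh]
  field_simp

theorem one_sub_tanh_sq (x : ℝ) : 1 - Real.tanh x ^ 2 = Real.cosh x ^ (-2 : ℝ) := by
  have hc := Real.cosh_pos x
  rw [Real.rpow_neg hc.le, Real.tanh_eq_sinh_div_cosh]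
  norm_cast
  have := Real.cosh_sq x
  field_simp
  linarith

theorem abs_le_cosh (x : ℝ) : |x| ≤ Real.cosh x := by
  rw [← Real.cosh_abs]
  exact (Real.self_le_sinh_iff.2 (abs_nonneg x)).trans (Real.sinh_lt_cosh _).le

theorem tendsto_cosh_rpow {l : Filter ℝ} {a p : ℝ} (ha : 0 < a) (hp : 0 < p)
    (hl : Tendsto (fun s : ℝ => |s|) l atTop) :
    Tendsto (fun s => Real.cosh (a * s) ^ (-p)) l (𝓝 0) := by
  refine (tendsto_rpow_neg_atTop hp).comp ?_
  refine tendsto_atTop_mono (fun s => abs_le_cosh (a * s)) ?_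
  simp only [abs_mul, abs_of_pos ha]
  exact hl.const_mul_atTop ha

theorem tendsto_tanh_sq {l : Filter ℝ} {a : ℝ} (ha : 0 < a)
    (hl : Tendsto (fun s : ℝ => |s|) l atTop) :
    Tendsto (fun s => Real.tanh (a * s) ^ 2) l (𝓝 1) := by
  have h := (tendsto_cosh_rpow ha two_pos hl).const_sub 1
  simp only [← one_sub_tanh_sq] at h
  simpa using h

theorem integrable_cosh_rpow_sq {a p : ℝ} (ha : 0 < a) (hp : 1 ≤ p) :
    Integrable (fun s => (Real.cosh (a * s) ^ (-p)) ^ 2) := by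
  have h := integrable_inv_one_add_sq.comp_mul_left' ha.ne'
  refine h.mono' ?_ (.of_forall fun s => ?_)
  · refine Continuous.aestronglyMeasurable (Continuous.pow ?_ 2)
    exact continuous_iff_continuousAt.2 fun s => (hasDerivAt_cosh_rpow a p s).continuousAt
  · have hc := Real.cosh_pos (a * s)
    have h1 : Real.cosh (a * s) ^ (-p) ≤ (Real.cosh (a * s))⁻¹ := by
      rw [← Real.rpow_neg_one]
      exact Real.rpow_le_rpow_of_exponent_le (Real.one_le_cosh _) (by linarith)
    have h2 : 1 + (a * s) ^ 2 ≤ Real.cosh (a * s) ^ 2 := by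
      rw [Real.cosh_sq]
      have := sq_le_sq' (a := |a * s|) (b := Real.sinh |a * s|)
        (by linarith [abs_nonneg (a * s), Real.self_le_sinh_iff.2 (abs_nonneg (a * s))])
        (Real.self_le_sinh_iff.2 (abs_nonneg _))
      rw [sq_abs, ← Real.abs_sinh, sq_abs] at this
      linarith
    rw [Real.norm_of_nonneg (by positivity)]
    calc (Real.cosh (a * s) ^ (-p)) ^ 2 ≤ ((Real.cosh (a * s))⁻¹) ^ 2 := by gcongr
      _ = (Real.cosh (a * s) ^ 2)⁻¹ := by rw [inv_pow]
      _ ≤ _ := by gcongr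

/-! ### Decay of `H¹` functions -/

theorem tendsto_zero_of_sq {l : Filter ℝ} {g : ℝ → ℝ}
    (h : Tendsto (fun s => g s ^ 2) l (𝓝 0)) : Tendsto g l (𝓝 0) := by
  have := h.sqrt
  simp only [Real.sqrt_sq_eq_abs, Real.sqrt_zero] at this
  exact (tendsto_zero_iff_abs_tendsto_zero _).2 this

theorem h1_tendsto_zero {g : ℝ → ℝ} (hg : ContDiff ℝ 1 g)
    (hg2 : Integrable (fun s => g s ^ 2)) (hg'2 : Integrable (fun s => deriv g s ^ 2)) :
    Tendsto g atTop (𝓝 0) ∧ Tendsto g atBot (𝓝 0) := by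
  have hd : ∀ s, HasDerivAt (fun s => g s ^ 2) (2 * g s * deriv g s) s := fun s => by
    simpa using ((hg.differentiable (by norm_num)) s).hasDerivAt.fun_pow 2
  have hc : Continuous (deriv g) := hg.continuous_deriv (by norm_num)
  have hi : Integrable (fun s => 2 * g s * deriv g s) := by
    refine (hg2.add hg'2).mono' ?_ (.of_forall fun s => ?_)
    · exact ((continuous_const.mul hg.continuous).mul hc).aestronglyMeasurable
    · simp only [Real.norm_eq_abs, Pi.add_apply, abs_le]
      constructor <;> nlinarith [sq_nonneg (g s + deriv g s), sq_nonneg (g s - deriv g s)]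
  exact ⟨tendsto_zero_of_sq (tendsto_zero_of_hasDerivAt_of_integrableOn_Ioi (a := 0)
      (fun s _ => hd s) hi.integrableOn hg2.integrableOn),
    tendsto_zero_of_sq (tendsto_zero_of_hasDerivAt_of_integrableOn_Iic (a := 0)
      (fun s _ => hd s) hi.integrableOn hg2.integrableOn)⟩

/-! ### The sum-of-squares identity -/

/-- The quadratic form of `-∂² - a²(p+1)(p+2) sech²(a·) + a²p²` at `g` is the integral of a sum of
two squares, for every `h` vanishing at `±∞` with `-h' + (p+1) a tanh(a·) h = g`. The difference
of the integrands is the derivative of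
`D = 2λgh - λ(2p+1)a tanh h² - (p+1)a tanh g²`, with `λ = (2p+1)a²`. -/
theorem sum_of_squares {a p : ℝ} (hp : 0 < p) {g h : ℝ → ℝ}
    (hg : ContDiff ℝ 1 g)
    (hg2 : Integrable (fun s => g s ^ 2)) (hg'2 : Integrable (fun s => deriv g s ^ 2))
    (hh : ∀ s, HasDerivAt h ((p + 1) * a * Real.tanh (a * s) * h s - g s) s)
    (htop : Tendsto h atTop (𝓝 0)) (hbot : Tendsto h atBot (𝓝 0)) :
    Integrable (fun s => (1 - Real.tanh (a * s) ^ 2) * g s ^ 2) ∧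
    Integrable (fun s =>
      (deriv g s + (p + 1) * a * Real.tanh (a * s) * g s - (2 * p + 1) * a ^ 2 * h s) ^ 2
        + (2 * p + 1) * a ^ 2 * ((2 * p + 1) * a * Real.tanh (a * s) * h s - g s) ^ 2) ∧
    (∫ s, deriv g s ^ 2)
        - a ^ 2 * (p + 1) * (p + 2) * (∫ s, (1 - Real.tanh (a * s) ^ 2) * g s ^ 2)
        + a ^ 2 * p ^ 2 * (∫ s, g s ^ 2) =
      ∫ s, ((deriv g s + (p + 1) * a * Real.tanh (a * s) * g s - (2 * p + 1) * a ^ 2 * h s) ^ 2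
        + (2 * p + 1) * a ^ 2 * ((2 * p + 1) * a * Real.tanh (a * s) * h s - g s) ^ 2) := by
  set T : ℝ → ℝ := fun s => Real.tanh (a * s) with hT
  have hTd : ∀ s, HasDerivAt T (a * (1 - T s ^ 2)) s := fun s => hasDerivAt_tanh_mul a s
  have hTc : Continuous T := continuous_iff_continuousAt.2 fun s => (hTd s).continuousAt
  have hhc : Continuous h := continuous_iff_continuousAt.2 fun s => (hh s).continuousAt
  have hgc := hg.continuous
  have hdc : Continuous (deriv g) := hg.continuous_deriv (by norm_num)
  have hgd : ∀ s, HasDerivAt g (deriv g s) s :=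
    fun s => ((hg.differentiable (by norm_num)) s).hasDerivAt
  have hT1 : ∀ s, T s ^ 2 < 1 := fun s => Real.tanh_sq_lt_one _
  obtain ⟨gtop, gbot⟩ := h1_tendsto_zero hg hg2 hg'2
  have hSi : Integrable (fun s => (1 - T s ^ 2) * g s ^ 2) := by
    refine hg2.mono' (by fun_prop) (.of_forall fun s => ?_)
    rw [Real.norm_of_nonneg (mul_nonneg (by linarith [hT1 s]) (sq_nonneg _))]
    nlinarith [sq_nonneg (T s), sq_nonneg (g s), mul_nonneg (sq_nonneg (T s)) (sq_nonneg (g s))]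
  set N : ℝ → ℝ := fun s =>
    (deriv g s + (p + 1) * a * T s * g s - (2 * p + 1) * a ^ 2 * h s) ^ 2
        + (2 * p + 1) * a ^ 2 * ((2 * p + 1) * a * T s * h s - g s) ^ 2 with hN
  have hNc : Continuous N := by fun_prop
  have hN0 : ∀ s, 0 ≤ N s := fun s => by positivity
  set L : ℝ → ℝ := fun s => deriv g s ^ 2
    - a ^ 2 * (p + 1) * (p + 2) * ((1 - T s ^ 2) * g s ^ 2) + a ^ 2 * p ^ 2 * g s ^ 2 with hL
  have hLc : Continuous L := by fun_prop
  have hLi : Integrable L := (hg'2.sub (hSi.const_mul _)).add (hg2.const_mul _)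
  set D : ℝ → ℝ := fun s => 2 * ((2 * p + 1) * a ^ 2) * (g s * h s)
    - (2 * p + 1) * a ^ 2 * ((2 * p + 1) * a) * (T s * h s ^ 2)
    - (p + 1) * a * (T s * g s ^ 2) with hD
  have hDd : ∀ s, HasDerivAt D (L s - N s) s := fun s => by
    have e1 := (hgd s).fun_mul (hh s)
    have e2 := (hTd s).fun_mul ((hh s).fun_pow 2)
    have e3 := (hTd s).fun_mul ((hgd s).fun_pow 2)
    refine (((e1.const_mul (2 * ((2 * p + 1) * a ^ 2))).fun_sub
      (e2.const_mul ((2 * p + 1) * a ^ 2 * ((2 * p + 1) * a)))).fun_sub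
      (e3.const_mul ((p + 1) * a))).congr_deriv ?_
    simp only [hL, hN, hT]
    push_cast
    ring
  have hlim : ∀ l : Filter ℝ, Tendsto g l (𝓝 0) → Tendsto h l (𝓝 0) → Tendsto D l (𝓝 0) := by
    intro l h1 h2
    have hbd : ∀ w : ℝ → ℝ, Tendsto w l (𝓝 0) → Tendsto (fun s => T s * w s ^ 2) l (𝓝 0) := by
      intro w hw
      have hw2 : Tendsto (fun s => w s ^ 2) l (𝓝 0) := by simpa using hw.pow 2
      refine squeeze_zero_norm (fun s => ?_) hw2
      rw [norm_mul, Real.norm_of_nonneg (sq_nonneg (w s)), Real.norm_eq_abs]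
      exact mul_le_of_le_one_left (sq_nonneg _) (Real.abs_tanh_lt_one _).le
    simpa using (((h1.mul h2).const_mul (2 * ((2 * p + 1) * a ^ 2))).sub
      ((hbd h h2).const_mul ((2 * p + 1) * a ^ 2 * ((2 * p + 1) * a)))).sub
      ((hbd g h1).const_mul ((p + 1) * a))
  have Dtop := hlim _ gtop htop
  have Dbot := hlim _ gbot hbot
  have hNi : Integrable N := by
    -- `∫_{-R}^R N = ∫_{-R}^R L - D(R) + D(-R)` converges as `R → ∞`
    refine integrable_of_intervalIntegral_norm_tendsto (l := atTop) (a := fun R : ℝ => -R)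
      (b := fun R => R) (∫ s, L s) (fun R => (hNc.integrableOn_Icc).mono_set Set.Ioc_subset_Icc_self)
      tendsto_neg_atTop_atBot tendsto_id ?_
    have key : ∀ R : ℝ, (∫ s in -R..R, ‖N s‖) = (∫ s in -R..R, L s) - (D R - D (-R)) := by
      intro R
      have := intervalIntegral.integral_eq_sub_of_hasDerivAt (a := -R) (b := R)
        (fun s _ => hDd s) ((hLc.sub hNc).intervalIntegrable _ _)
      rw [← this, intervalIntegral.integral_sub (hLc.intervalIntegrable _ _)
        (hNc.intervalIntegrable _ _)]
      simp only [Real.norm_of_nonneg (hN0 _)]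
      ring
    simp only [key]
    have := (intervalIntegral_tendsto_integral hLi tendsto_neg_atTop_atBot tendsto_id).sub
      (Dtop.sub (Dbot.comp tendsto_neg_atTop_atBot))
    simpa using this
  refine ⟨hSi, hNi, ?_⟩
  have hz := integral_of_hasDerivAt_of_tendsto hDd (hLi.sub hNi) Dbot Dtop
  rw [integral_sub hLi hNi, sub_self, sub_eq_zero] at hz
  rw [← hz]
  simp only [hL]
  have hLS : Integrable fun s => deriv g s ^ 2
      - a ^ 2 * (p + 1) * (p + 2) * ((1 - T s ^ 2) * g s ^ 2) := hg'2.sub (hSi.const_mul _)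
  rw [integral_add hLS (hg2.const_mul _),
    integral_sub hg'2 (hSi.const_mul _), integral_const_mul, integral_const_mul]

/-! ### Solving the first-order equation -/

/-- With `φ = cosh(a·)^{-(p+1)}`, the solution is `h = -φ⁻¹ ∫_{-∞}^s gφ`; orthogonality to `φ` makes
the numerator vanish at `+∞` as well, and L'Hôpital's rule gives the decay. -/
theorem exists_partner {a p : ℝ} (ha : 0 < a) (hp : 0 < p) {g : ℝ → ℝ} (hg : ContDiff ℝ 1 g)
    (hg2 : Integrable (fun s => g s ^ 2)) (hg'2 : Integrable (fun s => deriv g s ^ 2))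
    (horth : ∫ s, g s * Real.cosh (a * s) ^ (-(p + 1)) = 0) :
    ∃ h : ℝ → ℝ, (∀ s, HasDerivAt h ((p + 1) * a * Real.tanh (a * s) * h s - g s) s) ∧
      Tendsto h atTop (𝓝 0) ∧ Tendsto h atBot (𝓝 0) := by
  set φ : ℝ → ℝ := fun s => Real.cosh (a * s) ^ (-(p + 1)) with hφ
  have hφd : ∀ s, HasDerivAt φ (-(p + 1) * a * Real.tanh (a * s) * φ s) s :=
    fun s => hasDerivAt_cosh_rpow a (p + 1) s
  have hφc : Continuous φ := continuous_iff_continuousAt.2 fun s => (hφd s).continuousAt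
  have hφ0 : ∀ s, 0 < φ s := fun s => Real.rpow_pos_of_pos (Real.cosh_pos _) _
  have hc : Continuous (fun s => g s * φ s) := hg.continuous.mul hφc
  have hi : Integrable (fun s => g s * φ s) := by
    have h2 : Integrable (fun s => φ s ^ 2) := integrable_cosh_rpow_sq ha (by linarith)
    refine (hg2.add h2).mono' hc.aestronglyMeasurable (.of_forall fun s => ?_)
    simp only [Real.norm_eq_abs, Pi.add_apply, abs_le]
    constructor <;> nlinarith [sq_nonneg (g s + φ s), sq_nonneg (g s - φ s)]
  set F : ℝ → ℝ := fun s => -((∫ x in Set.Iic 0, g x * φ x) + ∫ x in (0:ℝ)..s, g x * φ x) with hF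
  have hFd : ∀ s, HasDerivAt F (-(g s * φ s)) s := fun s =>
    ((hc.integral_hasStrictDerivAt 0 s).hasDerivAt.const_add _).fun_neg
  have Ftop : Tendsto F atTop (𝓝 0) := by
    have h1 := intervalIntegral_tendsto_integral_Ioi 0 hi.integrableOn tendsto_id
    have h2 := (h1.const_add (∫ x in Set.Iic 0, g x * φ x)).neg
    rw [intervalIntegral.integral_Iic_add_Ioi hi.integrableOn hi.integrableOn, horth,
      neg_zero] at h2
    exact h2
  have Fbot : Tendsto F atBot (𝓝 0) := by
    have h1 := intervalIntegral_tendsto_integral_Iic 0 hi.integrableOn tendsto_id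
    have h2 := (h1.neg.const_add (∫ x in Set.Iic 0, g x * φ x)).neg
    rw [add_neg_cancel, neg_zero] at h2
    refine h2.congr fun s => ?_
    simp only [hF, id]
    rw [intervalIntegral.integral_symm 0 s]
    ring
  obtain ⟨gtop, gbot⟩ := h1_tendsto_zero hg hg2 hg'2
  have hquot : ∀ l : Filter ℝ, Tendsto (fun s : ℝ => |s|) l atTop → Tendsto g l (𝓝 0) →
      (∀ᶠ s in l, -(p + 1) * a * Real.tanh (a * s) * φ s ≠ 0) ∧
      Tendsto (fun s => -(g s * φ s) / (-(p + 1) * a * Real.tanh (a * s) * φ s)) l (𝓝 0) := by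
    intro l hl hgl
    have hT := tendsto_tanh_sq ha hl
    have hne : ∀ᶠ s in l, Real.tanh (a * s) ≠ 0 := by
      filter_upwards [hT.eventually_ne one_ne_zero] with s hs h0
      simp [h0] at hs
    have hgT : Tendsto (fun s => g s * Real.tanh (a * s)) l (𝓝 0) := by
      refine squeeze_zero_norm (fun s => ?_) (by simpa using hgl.norm)
      rw [norm_mul]
      exact mul_le_of_le_one_right (norm_nonneg _) (Real.abs_tanh_lt_one _).le
    constructor
    · filter_upwards [hne] with s hs
      have := (hφ0 s).ne'
      have : p + 1 ≠ 0 := by positivity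
      simp only [ne_eq, mul_eq_zero, neg_eq_zero, not_or]
      exact ⟨⟨⟨this, ha.ne'⟩, hs⟩, (hφ0 s).ne'⟩
    · have := hgT.div (hT.const_mul ((p + 1) * a)) (by positivity)
      rw [zero_div] at this
      refine this.congr' ?_
      filter_upwards [hne] with s hs
      have := (hφ0 s).ne'
      simp only [Pi.div_apply]
      field_simp
  obtain ⟨n1, q1⟩ := hquot _ tendsto_abs_atTop_atTop gtop
  obtain ⟨n2, q2⟩ := hquot _ tendsto_abs_atBot_atTop gbot
  refine ⟨fun s => F s / φ s, fun s => ?_, ?_, ?_⟩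
  · refine ((hFd s).fun_div (hφd s) (hφ0 s).ne').congr_deriv ?_
    have := (hφ0 s).ne'
    field_simp
    ring
  · exact HasDerivAt.lhopital_zero_atTop (.of_forall hFd) (.of_forall hφd) n1 Ftop
      (tendsto_cosh_rpow ha (by linarith) tendsto_abs_atTop_atTop) q1
  · exact HasDerivAt.lhopital_zero_atBot (.of_forall hFd) (.of_forall hφd) n2 Fbot
      (tendsto_cosh_rpow ha (by linarith) tendsto_abs_atBot_atTop) q2

/-! ### The inequality for the Pöschl–Teller operator -/

/-- The theorem in the parameters `a`, `p`, with `sech²` written as `1 - tanh²` and `u'` replaced by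
the proportional function `tanh(a·) cosh(a·)^{-p}`. -/
theorem poschl_teller {a p : ℝ} (ha : 0 < a) (hp : 0 < p) {g : ℝ → ℝ} (hg : ContDiff ℝ 1 g)
    (hg2 : Integrable (fun s => g s ^ 2)) (hg'2 : Integrable (fun s => deriv g s ^ 2))
    (horth : ∫ s, g s * Real.cosh (a * s) ^ (-(p + 1)) = 0) :
    0 ≤ (∫ s, deriv g s ^ 2)
        - a ^ 2 * (p + 1) * (p + 2) * (∫ s, (1 - Real.tanh (a * s) ^ 2) * g s ^ 2)
        + a ^ 2 * p ^ 2 * (∫ s, g s ^ 2) ∧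
    ((∫ s, deriv g s ^ 2)
        - a ^ 2 * (p + 1) * (p + 2) * (∫ s, (1 - Real.tanh (a * s) ^ 2) * g s ^ 2)
        + a ^ 2 * p ^ 2 * (∫ s, g s ^ 2) = 0 ↔
      ∃ c : ℝ, g = fun s => c * (Real.tanh (a * s) * Real.cosh (a * s) ^ (-p))) := by
  obtain ⟨h, hh, htop, hbot⟩ := exists_partner ha hp hg hg2 hg'2 horth
  obtain ⟨-, hNi, hE⟩ := sum_of_squares hp hg hg2 hg'2 hh htop hbot
  have hN0 : ∀ s, 0 ≤ (deriv g s + (p + 1) * a * Real.tanh (a * s) * g s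
      - (2 * p + 1) * a ^ 2 * h s) ^ 2
        + (2 * p + 1) * a ^ 2 * ((2 * p + 1) * a * Real.tanh (a * s) * h s - g s) ^ 2 :=
    fun s => by positivity
  refine ⟨hE ▸ integral_nonneg hN0, ?_, ?_⟩
  · intro h0
    rw [hE, integral_eq_zero_iff_of_nonneg hN0 hNi] at h0
    have hTc : Continuous fun s => Real.tanh (a * s) :=
      continuous_iff_continuousAt.2 fun s => (hasDerivAt_tanh_mul a s).continuousAt
    have hhc : Continuous h := continuous_iff_continuousAt.2 fun s => (hh s).continuousAt
    have hgc := hg.continuous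
    have hdc : Continuous (deriv g) := hg.continuous_deriv (by norm_num)
    have hz := (Continuous.ae_eq_iff_eq volume (by fun_prop) continuous_const).1 h0
    have hgh : ∀ s, g s = (2 * p + 1) * a * Real.tanh (a * s) * h s := by
      intro s
      have h1 := congrFun hz s
      have h2 := ((add_eq_zero_iff_of_nonneg (sq_nonneg _) (by positivity)).1 h1).2
      have h3 : (2 * p + 1) * a ^ 2 ≠ 0 := by positivity
      have h4 := pow_eq_zero_iff (two_ne_zero) |>.1 ((mul_eq_zero.1 h2).resolve_left h3)
      linarith
    -- `h' = -p a tanh(a·) h`, so `h` is a multiple of `cosh(a·)^{-p}`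
    have hconst : ∀ s, h s * Real.cosh (a * s) ^ p = h 0 * Real.cosh (a * 0) ^ p := by
      intro s
      have hd : ∀ s, HasDerivAt (fun s => h s * Real.cosh (a * s) ^ p) 0 s := fun s => by
        have e := (hh s).fun_mul (hasDerivAt_cosh_rpow a (-p) s)
        rw [neg_neg] at e
        refine e.congr_deriv ?_
        rw [hgh s]
        ring
      exact is_const_of_deriv_eq_zero (fun s => (hd s).differentiableAt)
        (fun s => (hd s).deriv) s 0
    refine ⟨(2 * p + 1) * a * (h 0 * Real.cosh (a * 0) ^ p), funext fun s => ?_⟩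
    have hc := Real.rpow_pos_of_pos (Real.cosh_pos (a * s)) p
    rw [hgh s, ← hconst s, Real.rpow_neg (Real.cosh_pos _).le]
    field_simp
  · rintro ⟨c, hc⟩
    -- for this `g` the explicit partner `c / ((2p+1)a) · cosh(a·)^{-p}` makes both squares vanish
    have hgs : ∀ s, g s = c * (Real.tanh (a * s) * Real.cosh (a * s) ^ (-p)) :=
      fun s => congrFun hc s
    have hgd : ∀ s, deriv g s = c * (a * (1 - Real.tanh (a * s) ^ 2) * Real.cosh (a * s) ^ (-p)
        + Real.tanh (a * s) * (-p * a * Real.tanh (a * s) * Real.cosh (a * s) ^ (-p))) := by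
      intro s
      rw [hc]
      exact (((hasDerivAt_tanh_mul a s).fun_mul (hasDerivAt_cosh_rpow a p s)).const_mul c).deriv
    have hk : (2 * p + 1) * a ≠ 0 := by positivity
    have hk' : 2 * p + 1 ≠ 0 := by positivity
    obtain ⟨-, -, hE'⟩ := sum_of_squares (a := a)
      (h := fun s => c / ((2 * p + 1) * a) * Real.cosh (a * s) ^ (-p)) hp hg hg2 hg'2
      (fun s => by
        refine ((hasDerivAt_cosh_rpow a p s).const_mul _).congr_deriv ?_
        rw [hgs s]
        field_simp
        ring)
      (by simpa using (tendsto_cosh_rpow ha hp tendsto_abs_atTop_atTop).const_mul _)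
      (by simpa using (tendsto_cosh_rpow ha hp tendsto_abs_atBot_atTop).const_mul _)
    rw [hE']
    refine (integral_congr_ae (.of_forall fun s => ?_)).trans (integral_zero ℝ ℝ)
    simp only [hgs s, hgd s]
    field_simp
    ring

/-! ### Translation to `u` -/

/-- For every `g ∈ H¹(ℝ)` orthogonal to `u^{q/2}` in `L²(ℝ)` one has
`∫ g'² - (q-1) ∫ u^{q-2} g² ≥ -Λ ∫ g²`, with equality iff `g` is a scalar multiple of
`∂_s u`; i.e. the second eigenvalue of `-∂_s² - (q-1)u^{q-2}` is `-Λ`, it is simple, with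
eigenfunction `∂_s u`. -/
theorem second_eigenvalue_inequality (q Λ : ℝ) (hq : 2 < q) (hΛ : 0 < Λ)
    (g : ℝ → ℝ) (hg : ContDiff ℝ 1 g)
    (hg2 : MeasureTheory.Integrable (fun s => g s ^ 2))
    (hg'2 : MeasureTheory.Integrable (fun s => deriv g s ^ 2))
    (horth : (∫ s, g s * Ufun q Λ s ^ (q / 2)) = 0) :
    -Λ * ∫ s, g s ^ 2 ≤
      (∫ s, deriv g s ^ 2) - (q - 1) * ∫ s, Ufun q Λ s ^ (q - 2) * g s ^ 2 ∧
    ((∫ s, deriv g s ^ 2) - (q - 1) * (∫ s, Ufun q Λ s ^ (q - 2) * g s ^ 2) =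
        -Λ * ∫ s, g s ^ 2 ↔
      ∃ c : ℝ, g = fun s => c * deriv (Ufun q Λ) s) := by
  have hq2 : 0 < q - 2 := by linarith
  have hq2' := hq2.ne'
  set a := alphaV q Λ with ha_def
  set p := 2 / (q - 2) with hp_def
  set b := betaV q Λ with hb_def
  have hp : 0 < p := by positivity
  have ha : 0 < a := by
    rw [ha_def, alphaV]
    have := Real.sqrt_pos.2 hΛ
    positivity
  have hX : 0 < q * Λ / 2 := by positivity
  have hb : 0 < b := Real.rpow_pos_of_pos hX _
  have hU : ∀ s, Ufun q Λ s = b * Real.cosh (a * s) ^ (-p) := fun s => rfl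
  have hUpow : ∀ s r, Ufun q Λ s ^ r = b ^ r * Real.cosh (a * s) ^ (-p * r) := fun s r => by
    rw [hU, Real.mul_rpow hb.le (Real.rpow_nonneg (Real.cosh_pos _).le _),
      ← Real.rpow_mul (Real.cosh_pos _).le]
  have hLam : a ^ 2 * p ^ 2 = Λ := by
    rw [ha_def, alphaV, mul_pow, Real.sq_sqrt hΛ.le, hp_def]
    field_simp
  have hcoef : (q - 1) * (q * Λ / 2) = a ^ 2 * (p + 1) * (p + 2) := by
    have e : a ^ 2 * (p + 1) * (p + 2) = a ^ 2 * p ^ 2 * ((1 + 1 / p) * (1 + 2 / p)) := by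
      field_simp
    rw [e, hLam, hp_def]
    field_simp
    ring
  have hpot : ∀ s, Ufun q Λ s ^ (q - 2) = q * Λ / 2 * (1 - Real.tanh (a * s) ^ 2) := fun s => by
    have e1 : b ^ (q - 2) = q * Λ / 2 := by
      rw [hb_def, betaV, ← Real.rpow_mul hX.le, one_div_mul_cancel hq2', Real.rpow_one]
    have e2 : -p * (q - 2) = -2 := by rw [hp_def]; field_simp
    rw [hUpow, e1, e2, one_sub_tanh_sq]
  have horth' : ∫ s, g s * Real.cosh (a * s) ^ (-(p + 1)) = 0 := by
    have e : ∀ s, g s * Ufun q Λ s ^ (q / 2)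
        = b ^ (q / 2) * (g s * Real.cosh (a * s) ^ (-(p + 1))) := fun s => by
      have e2 : -p * (q / 2) = -(p + 1) := by rw [hp_def]; field_simp; ring
      rw [hUpow, e2]
      ring
    simp only [e, integral_const_mul] at horth
    exact (mul_eq_zero.1 horth).resolve_left (Real.rpow_pos_of_pos hb _).ne'
  have hUd : ∀ s, deriv (Ufun q Λ) s
      = -(b * p * a) * (Real.tanh (a * s) * Real.cosh (a * s) ^ (-p)) := fun s => by
    refine (((hasDerivAt_cosh_rpow a p s).const_mul b).congr_deriv ?_).deriv
    ring
  obtain ⟨h1, h2⟩ := poschl_teller ha hp hg hg2 hg'2 horth'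
  have hform : (q - 1) * ∫ s, Ufun q Λ s ^ (q - 2) * g s ^ 2
      = a ^ 2 * (p + 1) * (p + 2) * ∫ s, (1 - Real.tanh (a * s) ^ 2) * g s ^ 2 := by
    simp only [hpot, mul_assoc (q * Λ / 2), integral_const_mul]
    rw [← hcoef]
    ring
  rw [hLam] at h1 h2
  rw [hform]
  refine ⟨by linarith, ?_⟩
  have hk : -(b * p * a) ≠ 0 := neg_ne_zero.2 (by positivity)
  rw [neg_mul, ← add_eq_zero_iff_eq_neg, h2]
  constructor
  · rintro ⟨c, rfl⟩
    refine ⟨c / -(b * p * a), funext fun s => ?_⟩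
    rw [hUd, ← mul_assoc (c / _), div_mul_cancel₀ _ hk]
  · rintro ⟨c, rfl⟩
    refine ⟨c * -(b * p * a), funext fun s => ?_⟩
    rw [hUd]
    ring
end
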